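/- Let p_1 ≥ p_2 ≥ … ≥ p_K > 0 and n_1 ≥ n_2 ≥ … ≥ n_{L−1} ≥ 0 with L ≤ K. Define A_{i_1,…,i_{L−1}} = S_{\{i_1,…,i_{L−1}\}} · ∏_{t=1}^{L−1} p_{i_t}^{n_t}, where for a set I of L−1 distinct indices, S_I = [z^m] ∏_{j∉I} T_u(p_j z) with T_u(x)=Σ_{r=0}^{u} x^r/r!, m ≥ 0 and u = n_{L−1}. Then the maximum of A_{i_1,…,i_{L−1}} over all injective tuples is attained at (i_1,…,i_{L−1}) = (1,2,…,L−1), and the maximum over injective tuples with i_1 ≠ 1 is attained at (2,1,3,…,L−1). -/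

import Mathlib

open Polynomial Finset

noncomputable def TT (u : ℕ) (x : ℝ) : Polynomial ℝ :=
  ∑ r ∈ Finset.range (u + 1), Polynomial.C (x ^ r / (r.factorial : ℝ)) * Polynomial.X ^ r

lemma TT_coeff (u : ℕ) (x : ℝ) (k : ℕ) :
    (TT u x).coeff k = if k < u + 1 then x ^ k / (k.factorial : ℝ) else 0 := by
  unfold TT
  rw [Polynomial.finsetSum_coeff]
  simp only [Polynomial.coeff_C_mul_X_pow]
  rw [Finset.sum_ite_eq]
  simp only [Finset.mem_range]

lemma prod_TT_nonneg {ι : Type*} [DecidableEq ι] (u : ℕ) (p : ι → ℝ) (hp : ∀ i, 0 < p i)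
    (s : Finset ι) : ∀ k, 0 ≤ (∏ j ∈ s, TT u (p j)).coeff k := by
  induction s using Finset.induction_on with
  | empty =>
    intro k
    rw [Finset.prod_empty, Polynomial.coeff_one]
    split_ifs <;> norm_num
  | insert a s ha ih =>
    intro k
    rw [Finset.prod_insert ha, Polynomial.coeff_mul]
    refine Finset.sum_nonneg fun x _ => mul_nonneg ?_ (ih _)
    rw [TT_coeff]
    have := hp a
    split_ifs
    · positivity
    · exact le_rfl

lemma pow_swap (a b : ℝ) (hb : 0 < b) (hab : b ≤ a) (r n : ℕ) (h : r ≤ n) :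
    a ^ r * b ^ n ≤ b ^ r * a ^ n := by
  obtain ⟨d, rfl⟩ := Nat.exists_eq_add_of_le h
  have ha : 0 < a := hb.trans_le hab
  have h1 : b ^ d ≤ a ^ d := pow_le_pow_left₀ hb.le hab d
  have h2 : 0 ≤ a ^ r * b ^ r := by positivity
  rw [pow_add, pow_add]
  nlinarith [mul_le_mul_of_nonneg_left h1 h2]

lemma coeff_exch (u m n : ℕ) (a b : ℝ) (hb : 0 < b) (hab : b ≤ a) (hn : u ≤ n)
    (Q : Polynomial ℝ) (hQ : ∀ k, 0 ≤ Q.coeff k) :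
    (TT u a * Q).coeff m * b ^ n ≤ (TT u b * Q).coeff m * a ^ n := by
  rw [Polynomial.coeff_mul, Polynomial.coeff_mul, Finset.sum_mul, Finset.sum_mul]
  refine Finset.sum_le_sum fun x _ => ?_
  rw [TT_coeff, TT_coeff]
  split_ifs with h
  · have h1 := pow_swap a b hb hab x.1 n (by omega)
    have h2 : 0 ≤ Q.coeff x.2 / (x.1.factorial : ℝ) := div_nonneg (hQ _) (by positivity)
    have := mul_le_mul_of_nonneg_right h1 h2
    calc _ = a ^ x.1 * b ^ n * (Q.coeff x.2 / (x.1.factorial : ℝ)) := by ring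
      _ ≤ _ := this
      _ = _ := by ring
  · simp

lemma swap_step (K N : ℕ) (p : Fin K → ℝ) (hpos : ∀ i, 0 < p i)
    (hpmono : ∀ i j : Fin K, i ≤ j → p j ≤ p i)
    (nn : Fin N → ℕ) (hnmono : ∀ s t : Fin N, s ≤ t → nn t ≤ nn s)
    (m u : ℕ) (hu : ∀ t, u ≤ nn t)
    (A : (Fin N → Fin K) → ℝ)
    (hA : ∀ ψ : Fin N → Fin K, A ψ =
      (∏ j ∈ (Finset.univ.image ψ)ᶜ, TT u (p j)).coeff m * ∏ t, p (ψ t) ^ nn t)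
    (ψ : Fin N → Fin K) (hψ : Function.Injective ψ) (t : Fin N) (i : Fin K)
    (hi : i ≤ ψ t) (hs : ∀ s, ψ s = i → t ≤ s) :
    A ψ ≤ A (fun s => Equiv.swap i (ψ t) (ψ s)) := by
  rcases eq_or_ne i (ψ t) with rfl | hne
  · simp
  have hp := hpmono _ _ hi
  have himg : ∀ x, x ∈ Finset.univ.image (fun s => Equiv.swap i (ψ t) (ψ s)) ↔
      Equiv.swap i (ψ t) x ∈ Finset.univ.image ψ := by
    intro x
    simp only [Finset.mem_image, Finset.mem_univ, true_and]
    constructor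
    · rintro ⟨s, rfl⟩
      exact ⟨s, by simp⟩
    · rintro ⟨s, h⟩
      exact ⟨s, by simp [h]⟩
  have htm : ψ t ∈ Finset.univ.image ψ := Finset.mem_image_of_mem _ (Finset.mem_univ _)
  rw [hA, hA]
  by_cases hmem : ∃ s, ψ s = i
  · obtain ⟨s, hsi⟩ := hmem
    have hts := hs s hsi
    have hst : s ≠ t := by rintro rfl; exact hne hsi.symm
    have him : i ∈ Finset.univ.image ψ := hsi ▸ Finset.mem_image_of_mem _ (Finset.mem_univ _)
    have hI : Finset.univ.image (fun s => Equiv.swap i (ψ t) (ψ s)) = Finset.univ.image ψ := by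
      ext x
      rw [himg]
      by_cases h1 : x = i
      · subst h1; simp only [Equiv.swap_apply_left, htm, him]
      by_cases h2 : x = ψ t
      · subst h2; simp only [Equiv.swap_apply_right, htm, him]
      rw [Equiv.swap_apply_of_ne_of_ne h1 h2]
    rw [hI]
    refine mul_le_mul_of_nonneg_left ?_ (prod_TT_nonneg u p hpos _ m)
    rw [← Finset.mul_prod_erase _ _ (Finset.mem_univ t),
      ← Finset.mul_prod_erase _ (fun t_1 => p ((Equiv.swap i (ψ t)) (ψ t_1)) ^ nn t_1) (Finset.mem_univ t)]
    have hse : s ∈ Finset.univ.erase t := by simp [hst]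
    rw [← Finset.mul_prod_erase _ _ hse,
      ← Finset.mul_prod_erase _ (fun t_1 => p ((Equiv.swap i (ψ t)) (ψ t_1)) ^ nn t_1) hse]
    have hrest : ∏ x ∈ (Finset.univ.erase t).erase s, p ((Equiv.swap i (ψ t)) (ψ x)) ^ nn x
        = ∏ x ∈ (Finset.univ.erase t).erase s, p (ψ x) ^ nn x := by
      refine Finset.prod_congr rfl fun x hx => ?_
      simp only [Finset.mem_erase, Finset.mem_univ, and_true] at hx
      rw [Equiv.swap_apply_of_ne_of_ne]
      · rw [← hsi]; exact fun h => hx.1 (hψ h)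
      · exact fun h => hx.2 (hψ h)
    rw [hrest, ← mul_assoc, ← mul_assoc]
    refine mul_le_mul_of_nonneg_right ?_ (Finset.prod_nonneg fun x _ => (pow_pos (hpos _) _).le)
    simp only [hsi, Equiv.swap_apply_left, Equiv.swap_apply_right]
    have := pow_swap (p i) (p (ψ t)) (hpos _) hp (nn s) (nn t) (hnmono _ _ hts)
    linarith
  · have him : i ∉ Finset.univ.image ψ := by
      simpa using hmem
    have hI1 : (Finset.univ.image ψ)ᶜ = insert i ((Finset.univ.image ψ)ᶜ.erase i) := by
      rw [Finset.insert_erase]; simpa using hmem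
    have hI2 : (Finset.univ.image (fun s => Equiv.swap i (ψ t) (ψ s)))ᶜ
        = insert (ψ t) ((Finset.univ.image ψ)ᶜ.erase i) := by
      ext x
      rw [Finset.mem_compl, himg, Finset.mem_insert, Finset.mem_erase, Finset.mem_compl]
      by_cases h1 : x = i
      · subst h1; simp [hne]
      by_cases h2 : x = ψ t
      · subst h2; simp only [Equiv.swap_apply_right, him]; simp
      rw [Equiv.swap_apply_of_ne_of_ne h1 h2]
      simp [h1, h2]
    rw [hI2, hI1, Finset.prod_insert (by simp), Finset.erase_insert (by simp),
      Finset.prod_insert (by simp)]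
    rw [← Finset.mul_prod_erase _ _ (Finset.mem_univ t),
      ← Finset.mul_prod_erase _ (fun t_1 => p ((Equiv.swap i (ψ t)) (ψ t_1)) ^ nn t_1) (Finset.mem_univ t)]
    have hrest : ∏ x ∈ Finset.univ.erase t, p ((Equiv.swap i (ψ t)) (ψ x)) ^ nn x
        = ∏ x ∈ Finset.univ.erase t, p (ψ x) ^ nn x := by
      refine Finset.prod_congr rfl fun x hx => ?_
      simp only [Finset.mem_erase, Finset.mem_univ, and_true] at hx
      rw [Equiv.swap_apply_of_ne_of_ne]
      · exact fun h => hmem ⟨x, h⟩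
      · exact fun h => hx (hψ h)
    rw [hrest, ← mul_assoc, ← mul_assoc]
    refine mul_le_mul_of_nonneg_right ?_ (Finset.prod_nonneg fun x _ => (pow_pos (hpos _) _).le)
    simp only [Equiv.swap_apply_right]
    exact coeff_exch u m (nn t) _ _ (hpos _) hp (hu t) _ (prod_TT_nonneg u p hpos _)

lemma swap_induct (K N : ℕ) (A : (Fin N → Fin K) → ℝ)
    (hstep : ∀ (ψ : Fin N → Fin K), Function.Injective ψ → ∀ (t : Fin N) (i : Fin K),
      i ≤ ψ t → (∀ s, ψ s = i → t ≤ s) → A ψ ≤ A (fun s => Equiv.swap i (ψ t) (ψ s)))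
    (τ : Fin N → Fin K) (hτ : Function.Injective τ) (k₀ : ℕ)
    (hτ' : ∀ t : Fin N, k₀ ≤ t.val → ∀ v, v < τ t → ∃ s, s < t ∧ τ s = v) :
    ∀ (d k : ℕ), k₀ ≤ k → N ≤ k + d → ∀ ψ : Fin N → Fin K, Function.Injective ψ →
      (∀ t : Fin N, t.val < k → ψ t = τ t) → A ψ ≤ A τ := by
  intro d
  induction d with
  | zero =>
    intro k _ hN ψ _ h
    have : ψ = τ := funext fun t => h t (by omega)
    rw [this]
  | succ d ih =>
    intro k hk hN ψ hψ h
    by_cases hkN : k < N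
    · set t : Fin N := ⟨k, hkN⟩ with ht
      have h1 : τ t ≤ ψ t := by
        by_contra! hlt
        obtain ⟨s, hs, hv⟩ := hτ' t hk _ hlt
        rw [← h s hs] at hv
        exact hs.ne (hψ hv)
      have h2 : ∀ s, ψ s = τ t → t ≤ s := by
        intro s hs
        by_contra! hlt
        rw [h s hlt] at hs
        exact hlt.ne (hτ hs)
      refine (hstep ψ hψ t (τ t) h1 h2).trans
        (ih (k + 1) (by omega) (by omega) _ ((Equiv.injective _).comp hψ) ?_)
      intro s hs
      rcases Nat.lt_succ_iff_lt_or_eq.mp hs with hs | hs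
      · have hst : s < t := hs
        rw [Equiv.swap_apply_of_ne_of_ne, h s hs]
        · rw [h s hs]; exact fun h' => hst.ne (hτ h')
        · exact fun h' => hst.ne (hψ h')
      · have : s = t := Fin.ext hs
        rw [this, Equiv.swap_apply_right]
    · exact ih (k + 1) (by omega) (by omega) ψ hψ (fun t _ => h t (by omega))

/-- among injective tuples, `A_{i₁,…,i_{L−1}}` is maximized by
`(1,2,…,L−1)`, and among injective tuples with `i₁ ≠ 1` by `(2,1,3,…,L−1)`. -/
theorem stmt_7 (K L : ℕ) (hL : 2 ≤ L) (hLK : L ≤ K)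
    (p : Fin K → ℝ) (hpos : ∀ i, 0 < p i)
    (hpmono : ∀ i j : Fin K, i ≤ j → p j ≤ p i)
    (nn : Fin (L - 1) → ℕ)
    (hnmono : ∀ s t : Fin (L - 1), s ≤ t → nn t ≤ nn s)
    (m : ℕ) (u : ℕ) (hu : u = nn ⟨L - 2, by omega⟩)
    (S : Finset (Fin K) → ℝ)
    (hS : ∀ I : Finset (Fin K), S I =
      (∏ j ∈ Iᶜ, (∑ r ∈ Finset.range (u + 1),
        Polynomial.C ((p j) ^ r / (r.factorial : ℝ)) * Polynomial.X ^ r :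
          Polynomial ℝ)).coeff m)
    (A : (Fin (L - 1) → Fin K) → ℝ)
    (hA : ∀ ψ : Fin (L - 1) → Fin K,
      A ψ = S (Finset.univ.image ψ) * ∏ t, p (ψ t) ^ nn t) :
    (∀ ψ : Fin (L - 1) → Fin K, Function.Injective ψ →
      A ψ ≤ A (fun t => Fin.castLE (by omega) t)) ∧
    (∀ ψ : Fin (L - 1) → Fin K, Function.Injective ψ →
      ψ ⟨0, by omega⟩ ≠ ⟨0, by omega⟩ →
      A ψ ≤ A (fun t =>
        if t.val = 0 then (⟨1, by omega⟩ : Fin K)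
        else if t.val = 1 then ⟨0, by omega⟩
        else Fin.castLE (by omega) t)) := by

  have hstep := swap_step K (L - 1) p hpos hpmono nn hnmono m u
    (fun t => by rw [hu]; exact hnmono _ _ (Fin.le_def.mpr (by simp only; omega))) A
    (fun ψ => by rw [hA, hS]; rfl)
  constructor
  · intro ψ hψ
    refine swap_induct K (L - 1) A hstep _ (Fin.castLE_injective _) 0 ?_ (L - 1) 0 le_rfl
      (by omega) ψ hψ (fun t ht => absurd ht (by omega))
    intro t _ v hv
    have hv' : v.val < t.val := hv
    exact ⟨⟨v.val, by omega⟩, hv', rfl⟩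
  · set τ : Fin (L - 1) → Fin K := (fun t =>
        if t.val = 0 then (⟨1, by omega⟩ : Fin K)
        else if t.val = 1 then ⟨0, by omega⟩
        else Fin.castLE (by omega) t) with hτdef
    have hτv : ∀ t, (τ t).val = if t.val = 0 then 1 else if t.val = 1 then 0 else t.val := by
      intro t
      simp only [hτdef]
      split_ifs <;> rfl
    have hτinj : Function.Injective τ := by
      intro a b hab
      have h := congrArg Fin.val hab
      rw [hτv, hτv] at h
      apply Fin.ext
      split_ifs at h <;> omega
    have hind := swap_induct K (L - 1) A hstep τ hτinj 2 (by
      intro t ht v hv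
      have hv' : v.val < (τ t).val := hv
      rw [hτv, if_neg (by omega), if_neg (by omega)] at hv'
      refine ⟨⟨if v.val = 0 then 1 else if v.val = 1 then 0 else v.val, ?_⟩, ?_, ?_⟩
      · split_ifs <;> omega
      · rw [Fin.lt_def]; simp only; split_ifs <;> omega
      · apply Fin.ext
        rw [hτv]
        by_cases e0 : v.val = 0
        · simp [e0]
        by_cases e1 : v.val = 1
        · simp [e1]
        simp [e0, e1]) (L - 1) 2 le_rfl (by omega)
    -- handle position 0 once position 1 (if any) is right
    have hfin : ∀ ψ : Fin (L - 1) → Fin K, Function.Injective ψ →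
        ψ ⟨0, by omega⟩ ≠ ⟨0, by omega⟩ →
        (∀ t : Fin (L - 1), t.val = 1 → ψ t = ⟨0, by omega⟩) → A ψ ≤ A τ := by
      intro ψ hψ h0 h1
      have h0' : (ψ ⟨0, by omega⟩).val ≠ 0 := fun h => h0 (Fin.ext h)
      refine (hstep ψ hψ ⟨0, by omega⟩ ⟨1, by omega⟩ (Fin.le_def.mpr (by simp only; omega))
        (fun s _ => Fin.le_def.mpr (Nat.zero_le _))).trans
        (hind _ ((Equiv.injective _).comp hψ) ?_)
      intro t ht
      rcases (by omega : t.val = 0 ∨ t.val = 1) with h | h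
      · have : t = ⟨0, by omega⟩ := Fin.ext h
        rw [this, Equiv.swap_apply_right]
        apply Fin.ext; rw [hτv]; simp
      · rw [h1 t h, Equiv.swap_apply_of_ne_of_ne]
        · apply Fin.ext; rw [hτv]; simp [h]
        · simp [Fin.ext_iff]
        · exact fun h => h0 h.symm
    intro ψ hψ h0
    by_cases hL3 : 3 ≤ L
    · refine (hstep ψ hψ ⟨1, by omega⟩ ⟨0, by omega⟩ (Fin.le_def.mpr (Nat.zero_le _)) ?_).trans
        (hfin _ ((Equiv.injective _).comp hψ) ?_ ?_)
      · intro s hs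
        rw [Fin.le_def]
        by_contra hlt
        have : s = ⟨0, by omega⟩ := Fin.ext (by simp only at hlt ⊢; omega)
        exact h0 (this ▸ hs)
      · rw [Equiv.swap_apply_of_ne_of_ne h0]
        · exact h0
        · intro h; have := hψ h; simp [Fin.ext_iff] at this
      · intro t ht
        have : t = ⟨1, by omega⟩ := Fin.ext ht
        rw [this, Equiv.swap_apply_right]
    · exact hfin ψ hψ h0 (fun t ht => absurd ht (by omega))
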